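/- The group homomorphism from A(D4) to G₁₃₀ sending the generators a1, a2, a3, b of A(D4) to the like-named generators of G₁₃₀ (which is well defined since the defining relations of A(D4) hold among these elements of G₁₃₀) is injective; in particular a1, a2, a3, b generate a subgroup of G₁₃₀ isomorphic to A(D4). -/

import Mathlib

/-- Relations of the Artin group of type `D₄` on generators `a1 = of 0`, `a2 = of 1`,
`a3 = of 2`, `b = of 3`: the `aᵢ` pairwise commute and each `aᵢ` braids with `b`. -/
def AD4rels : Set (FreeGroup (Fin 4)) :=
  {FreeGroup.of 0 * FreeGroup.of 1 * (FreeGroup.of 1 * FreeGroup.of 0)⁻¹,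
   FreeGroup.of 0 * FreeGroup.of 2 * (FreeGroup.of 2 * FreeGroup.of 0)⁻¹,
   FreeGroup.of 1 * FreeGroup.of 2 * (FreeGroup.of 2 * FreeGroup.of 1)⁻¹,
   FreeGroup.of 0 * FreeGroup.of 3 * FreeGroup.of 0 *
      (FreeGroup.of 3 * FreeGroup.of 0 * FreeGroup.of 3)⁻¹,
   FreeGroup.of 1 * FreeGroup.of 3 * FreeGroup.of 1 *
      (FreeGroup.of 3 * FreeGroup.of 1 * FreeGroup.of 3)⁻¹,
   FreeGroup.of 2 * FreeGroup.of 3 * FreeGroup.of 2 *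
      (FreeGroup.of 3 * FreeGroup.of 2 * FreeGroup.of 3)⁻¹}

/-- The Artin group of type `D₄`, as a presented group. -/
abbrev AD4 : Type := PresentedGroup AD4rels

namespace G130aux
/-- Generators of the Gervais presentation of `PMod(1,3,0)`:
`b = of 0`, `a1 = of 1`, `a2 = of 2`, `a3 = of 3`,
`c12 = of 4`, `c21 = of 5`, `c13 = of 6`, `c31 = of 7`, `c23 = of 8`, `c32 = of 9`. -/
def g (i : Fin 10) : FreeGroup (Fin 10) := FreeGroup.of i
/-- The relator expressing that `x` and `y` commute. -/
def comm (x y : FreeGroup (Fin 10)) : FreeGroup (Fin 10) := x * y * (y * x)⁻¹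
/-- The relator expressing the braid relation `x y x = y x y`. -/
def braid (x y : FreeGroup (Fin 10)) : FreeGroup (Fin 10) := x * y * x * (y * x * y)⁻¹
end G130aux

open G130aux in
/-- The relations of the Gervais presentation of `PMod(1,3,0)`. -/
def G130rels : Set (FreeGroup (Fin 10)) :=
  {comm (g 1) (g 2), comm (g 1) (g 3), comm (g 2) (g 3),
   comm (g 1) (g 4), comm (g 1) (g 5), comm (g 1) (g 6), comm (g 1) (g 7), comm (g 1) (g 8),
   comm (g 2) (g 4), comm (g 2) (g 5), comm (g 2) (g 7), comm (g 2) (g 8), comm (g 2) (g 9),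
   comm (g 3) (g 4), comm (g 3) (g 6), comm (g 3) (g 7), comm (g 3) (g 8), comm (g 3) (g 9),
   comm (g 0) (g 4), comm (g 0) (g 5), comm (g 0) (g 6), comm (g 0) (g 7), comm (g 0) (g 8),
   comm (g 0) (g 9),
   comm (g 4) (g 5), comm (g 4) (g 6), comm (g 4) (g 7), comm (g 4) (g 8), comm (g 4) (g 9),
   comm (g 8) (g 5), comm (g 8) (g 6), comm (g 8) (g 7), comm (g 8) (g 9),
   comm (g 7) (g 5), comm (g 7) (g 6), comm (g 7) (g 9),
   braid (g 1) (g 0), braid (g 2) (g 0), braid (g 3) (g 0),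
   g 4 * g 5 * ((g 1 * g 2 * g 0) ^ 4)⁻¹,
   g 6 * g 7 * ((g 1 * g 3 * g 0) ^ 4)⁻¹,
   g 8 * g 9 * ((g 2 * g 3 * g 0) ^ 4)⁻¹,
   g 4 * g 8 * g 7 * ((g 1 * g 2 * g 3 * g 0) ^ 3)⁻¹}

/-- The Gervais presentation of the pure mapping class group `PMod(1,3,0)`. -/
abbrev G130 : Type := PresentedGroup G130rels

/-!
`A(D₄)` is a retract of `G₁₃₀`. To define the retraction `G₁₃₀ → A(D₄)` one only has to find images
for the `cᵢⱼ`. Since `(a₁a₂a₃b)³` is central in `A(D₄)`, and each `(aᵢaⱼb)⁴` commutes with `aᵢ`,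
`aⱼ` and `b`, the star relations can be solved by
`c₁₂ = (a₁a₂a₃b)³`, `c₂₃ = c₃₁ = 1`, `c₂₁ = c₁₂⁻¹(a₁a₂b)⁴`, `c₁₃ = (a₁a₃b)⁴`, `c₃₂ = (a₂a₃b)⁴`,
and the commutation relations then hold as well.

For the centrality, `u = a₂a₃` satisfies `(ub)² = (bu)²` by folding, which gives
`(a₁ub)³ = (uba₁)³`, so `a₁` commutes with `(a₁a₂a₃b)³`; by symmetry so do `a₂` and `a₃`, and hence
also `b`, because `a₁a₂a₃b` commutes with its own power.
-/

/-- The braid relation `x y x = y x y`, between elements of any multiplicative structure; `Commute`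
is its analogue for the Artin relation of length two. -/
def BraidRel {M : Type*} [Mul M] (x y : M) : Prop :=
  x * y * x = y * x * y

theorem commute_right_of_commute_mul {M : Type*} [LeftCancelSemigroup M] {c w b : M}
    (hw : Commute c w) (hwb : Commute c (w * b)) : Commute c b :=
  mul_left_cancel (a := w) <| by rw [← hw.left_comm, hwb.eq, mul_assoc]

namespace BraidRel

protected theorem eq {M : Type*} [Mul M] {x y : M} (h : BraidRel x y) : x * y * x = y * x * y :=
  h

section Monoid

variable {M : Type*} [Monoid M] {x y u b : M}

/-- This is the folding of type `A₃` onto type `B₂`: `xy` and `b` satisfy the Artin relation of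
length four. -/
theorem mul_mul_sq_eq (hx : BraidRel x b) (hxy : Commute x y) (hy : BraidRel y b) :
    (x * y * b) ^ 2 = (b * (x * y)) ^ 2 := by
  calc (x * y * b) ^ 2 = x * (y * b * y) * x * b := by
        simp only [sq, mul_assoc, hxy.left_comm]
    _ = x * b * y * (b * x * b) := by rw [hy.eq]; simp only [mul_assoc]
    _ = x * b * x * (y * b * x) := by rw [← hx.eq]; simp only [mul_assoc, hxy.left_comm]
    _ = b * x * (b * y * b) * x := by rw [hx.eq]; simp only [mul_assoc]
    _ = (b * (x * y)) ^ 2 := by rw [← hy.eq]; simp only [sq, mul_assoc, hxy.symm.left_comm, hxy.eq]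

theorem semiconjBy_mul_mul_sq (hx : BraidRel x b) (hxy : Commute x y) (hy : BraidRel y b) :
    SemiconjBy ((x * y * b) ^ 2) y x := by
  calc (x * y * b) ^ 2 * y = x * y * b * x * (y * b * y) := by simp only [sq, mul_assoc]
    _ = x * y * (b * x * b) * y * b := by rw [hy.eq]; simp only [mul_assoc]
    _ = x * (x * y * b) ^ 2 := by rw [← hx.eq]; simp only [sq, mul_assoc, hxy.left_comm]

theorem commute_mul_mul_pow_four (hx : BraidRel x b) (hxy : Commute x y) (hy : BraidRel y b) :
    Commute x ((x * y * b) ^ 4) := by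
  have hyx : SemiconjBy ((x * y * b) ^ 2) y x := hx.semiconjBy_mul_mul_sq hxy hy
  have hxy' : SemiconjBy ((x * y * b) ^ 2) x y := by
    simpa only [hxy.eq] using hy.semiconjBy_mul_mul_sq hxy.symm hx
  simpa only [← pow_add] using Commute.symm (hyx.mul_left hxy')

theorem commute_mul_mul_pow_four_middle (hx : BraidRel x b) (hxy : Commute x y)
    (hy : BraidRel y b) : Commute y ((x * y * b) ^ 4) := by
  simpa only [hxy.eq] using hy.commute_mul_mul_pow_four hxy.symm hx

theorem commute_mul_mul_pow_three (hx : BraidRel x b) (hxu : Commute x u)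
    (hu : (u * b) ^ 2 = (b * u) ^ 2) : Commute x ((x * u * b) ^ 3) := by
  have rotate : (x * u * b) ^ 3 = (u * b * x) ^ 3 := by
    calc (x * u * b) ^ 3 = u * (x * b * x) * u * b * u * x * b := by
          simp only [pow_succ, pow_zero, one_mul, mul_assoc, hxu.left_comm]
      _ = u * b * x * (b * u) ^ 2 * x * b := by rw [hx.eq]; simp only [sq, mul_assoc]
      _ = u * b * x * u * b * u * (b * x * b) := by rw [← hu]; simp only [sq, mul_assoc]
      _ = (u * b * x) ^ 3 := by
        rw [← hx.eq]
        simp only [pow_succ, pow_zero, one_mul, mul_assoc, hxu.left_comm]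
  calc x * (x * u * b) ^ 3 = x * (u * b * x) ^ 3 := by rw [rotate]
    _ = (x * u * b) ^ 3 * x := by simp only [pow_succ, pow_zero, one_mul, mul_assoc]

end Monoid

theorem commute_mul_mul_pow_four_right {M : Type*} [LeftCancelMonoid M] {x y b : M}
    (hx : BraidRel x b) (hxy : Commute x y) (hy : BraidRel y b) : Commute b ((x * y * b) ^ 4) :=
  .symm <| commute_right_of_commute_mul
    ((hx.commute_mul_mul_pow_four hxy hy).mul_left
      (hx.commute_mul_mul_pow_four_middle hxy hy)).symm
    (Commute.pow_self (x * y * b) 4)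

end BraidRel

/-- The defining relations of the Artin group of type `D₄`: the legs `a₁`, `a₂`, `a₃` commute
pairwise and each of them braids with the central node `b`. -/
structure IsArtinD4 {M : Type*} [Mul M] (a₁ a₂ a₃ b : M) : Prop where
  comm₁₂ : Commute a₁ a₂
  comm₁₃ : Commute a₁ a₃
  comm₂₃ : Commute a₂ a₃
  braid₁ : BraidRel a₁ b
  braid₂ : BraidRel a₂ b
  braid₃ : BraidRel a₃ b

namespace IsArtinD4

section Monoid

variable {M : Type*} [Monoid M] {a₁ a₂ a₃ b : M}

theorem rotate (h : IsArtinD4 a₁ a₂ a₃ b) : IsArtinD4 a₂ a₃ a₁ b :=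
  ⟨h.comm₂₃, h.comm₁₂.symm, h.comm₁₃.symm, h.braid₂, h.braid₃, h.braid₁⟩

theorem mul_mul_rotate (h : IsArtinD4 a₁ a₂ a₃ b) : a₂ * a₃ * a₁ = a₁ * a₂ * a₃ := by
  rw [← (h.comm₁₂.mul_right h.comm₁₃).eq, mul_assoc]

theorem commute_pow_three₁ (h : IsArtinD4 a₁ a₂ a₃ b) : Commute a₁ ((a₁ * a₂ * a₃ * b) ^ 3) := by
  simpa only [mul_assoc] using h.braid₁.commute_mul_mul_pow_three
    (h.comm₁₂.mul_right h.comm₁₃) (h.braid₂.mul_mul_sq_eq h.comm₂₃ h.braid₃)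

theorem commute_pow_three₂ (h : IsArtinD4 a₁ a₂ a₃ b) : Commute a₂ ((a₁ * a₂ * a₃ * b) ^ 3) :=
  h.mul_mul_rotate ▸ h.rotate.commute_pow_three₁

theorem commute_pow_three₃ (h : IsArtinD4 a₁ a₂ a₃ b) : Commute a₃ ((a₁ * a₂ * a₃ * b) ^ 3) :=
  h.mul_mul_rotate ▸ h.rotate.commute_pow_three₂

end Monoid

theorem commute_pow_three_b {M : Type*} [LeftCancelMonoid M] {a₁ a₂ a₃ b : M}
    (h : IsArtinD4 a₁ a₂ a₃ b) : Commute b ((a₁ * a₂ * a₃ * b) ^ 3) :=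
  .symm <| commute_right_of_commute_mul
    ((h.commute_pow_three₁.mul_left h.commute_pow_three₂).mul_left h.commute_pow_three₃).symm
    (Commute.pow_self (a₁ * a₂ * a₃ * b) 3)

end IsArtinD4

section Relators

open G130aux

variable {G : Type*} [Group G]

theorem lift_comm_eq_one_iff (φ : Fin 10 → G) (i j : Fin 10) :
    FreeGroup.lift φ (G130aux.comm (g i) (g j)) = 1 ↔ Commute (φ i) (φ j) := by
  simp only [G130aux.comm, g, map_mul, map_inv, FreeGroup.lift_apply_of, mul_inv_eq_one,
    commute_iff_eq]

theorem lift_braid_eq_one_iff (φ : Fin 10 → G) (i j : Fin 10) :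
    FreeGroup.lift φ (braid (g i) (g j)) = 1 ↔ BraidRel (φ i) (φ j) := by
  simp only [braid, g, map_mul, map_inv, FreeGroup.lift_apply_of, mul_inv_eq_one, BraidRel]

end Relators

namespace AD4

theorem isArtinD4_of :
    IsArtinD4 (PresentedGroup.of 0 : AD4) (PresentedGroup.of 1) (PresentedGroup.of 2)
      (PresentedGroup.of 3) := by
  constructor <;> exact PresentedGroup.mk_eq_mk_of_mul_inv_mem (by simp [AD4rels])

section Lift

variable {G : Type*} [Group G] {a₁ a₂ a₃ b : G}

theorem lift_eq_one_of_isArtinD4 (h : IsArtinD4 a₁ a₂ a₃ b) :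
    ∀ r ∈ AD4rels, FreeGroup.lift ![a₁, a₂, a₃, b] r = 1 := by
  simp only [AD4rels, Set.mem_insert_iff, Set.mem_singleton_iff, forall_eq_or_imp, forall_eq,
    map_mul, map_inv, FreeGroup.lift_apply_of, mul_inv_eq_one]
  exact ⟨h.comm₁₂, h.comm₁₃, h.comm₂₃, h.braid₁, h.braid₂, h.braid₃⟩

/-- The homomorphism from `A(D₄)` to a group `G` given by four elements of `G` that satisfy the
relations of type `D₄`. -/
def lift (h : IsArtinD4 a₁ a₂ a₃ b) : AD4 →* G :=
  PresentedGroup.toGroup (lift_eq_one_of_isArtinD4 h)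

end Lift

end AD4

namespace G130

open G130aux in
theorem commute_of {i j : Fin 10} (h : G130aux.comm (g i) (g j) ∈ G130rels) :
    Commute (PresentedGroup.of i : G130) (PresentedGroup.of j) :=
  PresentedGroup.mk_eq_mk_of_mul_inv_mem h

open G130aux in
theorem braidRel_of {i j : Fin 10} (h : braid (g i) (g j) ∈ G130rels) :
    BraidRel (PresentedGroup.of i : G130) (PresentedGroup.of j) :=
  PresentedGroup.mk_eq_mk_of_mul_inv_mem h

theorem isArtinD4_of :
    IsArtinD4 (PresentedGroup.of 1 : G130) (PresentedGroup.of 2) (PresentedGroup.of 3)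
      (PresentedGroup.of 0) where
  comm₁₂ := commute_of (by simp [G130rels])
  comm₁₃ := commute_of (by simp [G130rels])
  comm₂₃ := commute_of (by simp [G130rels])
  braid₁ := braidRel_of (by simp [G130rels])
  braid₂ := braidRel_of (by simp [G130rels])
  braid₃ := braidRel_of (by simp [G130rels])

section Extend

variable {G : Type*} [Group G] {a₁ a₂ a₃ b : G}

/-- The images of the ten generators of `G₁₃₀` under the homomorphism to `G` that extends a given
quadruple `a₁, a₂, a₃, b` and kills the boundary twists `c₃₁` and `c₂₃`; the star relations then
determine the images of the other `cᵢⱼ`. -/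
def extendFun (a₁ a₂ a₃ b : G) : Fin 10 → G :=
  ![b, a₁, a₂, a₃,
    (a₁ * a₂ * a₃ * b) ^ 3, ((a₁ * a₂ * a₃ * b) ^ 3)⁻¹ * (a₁ * a₂ * b) ^ 4,
    (a₁ * a₃ * b) ^ 4, 1,
    1, (a₂ * a₃ * b) ^ 4]

theorem lift_extendFun_eq_one (h : IsArtinD4 a₁ a₂ a₃ b) :
    ∀ r ∈ G130rels, FreeGroup.lift (extendFun a₁ a₂ a₃ b) r = 1 := by
  have a₁_c13 := h.braid₁.commute_mul_mul_pow_four h.comm₁₃ h.braid₃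
  have a₃_c13 := h.braid₁.commute_mul_mul_pow_four_middle h.comm₁₃ h.braid₃
  have b_c13 := h.braid₁.commute_mul_mul_pow_four_right h.comm₁₃ h.braid₃
  have a₂_c32 := h.braid₂.commute_mul_mul_pow_four h.comm₂₃ h.braid₃
  have a₃_c32 := h.braid₂.commute_mul_mul_pow_four_middle h.comm₂₃ h.braid₃
  have b_c32 := h.braid₂.commute_mul_mul_pow_four_right h.comm₂₃ h.braid₃
  have a₁_c21 := h.commute_pow_three₁.inv_right.mul_right
    (h.braid₁.commute_mul_mul_pow_four h.comm₁₂ h.braid₂)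
  have a₂_c21 := h.commute_pow_three₂.inv_right.mul_right
    (h.braid₁.commute_mul_mul_pow_four_middle h.comm₁₂ h.braid₂)
  have b_c21 := h.commute_pow_three_b.inv_right.mul_right
    (h.braid₁.commute_mul_mul_pow_four_right h.comm₁₂ h.braid₂)
  have c12_c13 := (((h.commute_pow_three₁.mul_left
    h.commute_pow_three₃).mul_left h.commute_pow_three_b).pow_left 4).symm
  have c12_c32 := (((h.commute_pow_three₂.mul_left
    h.commute_pow_three₃).mul_left h.commute_pow_three_b).pow_left 4).symm
  have c12_c21 := (Commute.refl ((a₁ * a₂ * a₃ * b) ^ 3)).inv_right.mul_right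
    (((h.commute_pow_three₁.mul_left
      h.commute_pow_three₂).mul_left h.commute_pow_three_b).pow_left 4).symm
  simp only [G130rels, Set.mem_insert_iff, Set.mem_singleton_iff, forall_eq_or_imp, forall_eq,
    lift_comm_eq_one_iff, lift_braid_eq_one_iff]
  simp only [map_mul, map_inv, map_pow, G130aux.g, FreeGroup.lift_apply_of, mul_inv_eq_one]
  exact ⟨h.comm₁₂, h.comm₁₃, h.comm₂₃,
    h.commute_pow_three₁, a₁_c21, a₁_c13, .one_right _, .one_right _,
    h.commute_pow_three₂, a₂_c21, .one_right _, .one_right _, a₂_c32,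
    h.commute_pow_three₃, a₃_c13, .one_right _, .one_right _, a₃_c32,
    h.commute_pow_three_b, b_c21, b_c13, .one_right _, .one_right _, b_c32,
    c12_c21, c12_c13, .one_right _, .one_right _, c12_c32,
    .one_left _, .one_left _, .one_left _, .one_left _,
    .one_left _, .one_left _, .one_left _,
    h.braid₁, h.braid₂, h.braid₃,
    mul_inv_cancel_left _ _, mul_one _, one_mul _, (mul_one _).trans (mul_one _)⟩

/-- The homomorphism from `G₁₃₀` to a group `G` that extends a given quadruple of elements of `G`
satisfying the relations of type `D₄`, with `c₃₁` and `c₂₃` sent to `1`. -/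
def extend (h : IsArtinD4 a₁ a₂ a₃ b) : G130 →* G :=
  PresentedGroup.toGroup (lift_extendFun_eq_one h)

end Extend

end G130

/-- The homomorphism `A(D₄) → G₁₃₀` that sends each generator to the generator of the same name. -/
def AD4.inclusion : AD4 →* G130 :=
  AD4.lift G130.isArtinD4_of

/-- The homomorphism `G₁₃₀ → A(D₄)` that sends each of `a₁`, `a₂`, `a₃`, `b` to the generator of the
same name; it is a left inverse of `AD4.inclusion`. -/
def G130.retraction : G130 →* AD4 :=
  G130.extend AD4.isArtinD4_of

theorem G130.retraction_comp_inclusion : retraction.comp AD4.inclusion = MonoidHom.id AD4 := by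
  ext i
  fin_cases i <;> rfl

/-- Proposition 8 (first part): the homomorphism `A(D₄) → PMod(1,3,0)` sending the
generators `a1, a2, a3, b` of `A(D₄)` to the like-named generators of the Gervais
presentation is injective, i.e. `a1, a2, a3, b` generate a copy of `A(D₄)` in `PMod(1,3,0)`. -/
theorem stmt_7 :
    ∃ f : AD4 →* G130,
      f (PresentedGroup.of 0) = PresentedGroup.of 1 ∧
      f (PresentedGroup.of 1) = PresentedGroup.of 2 ∧
      f (PresentedGroup.of 2) = PresentedGroup.of 3 ∧
      f (PresentedGroup.of 3) = PresentedGroup.of 0 ∧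
      Function.Injective f := by
  exact ⟨AD4.inclusion, rfl, rfl, rfl, rfl,
    Function.LeftInverse.injective (DFunLike.congr_fun G130.retraction_comp_inclusion)⟩
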